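/- arXiv:2308.10547 — 2 statements merged into one kernel-verified Lean document; each statement's English description precedes it below -/
import Mathlib

section
/- For all x, y ∈ St(d,r) and every v ∈ ℝ^{d×r}, the tangent-space projections at x and y satisfy ‖P_{T_x}(v) − P_{T_y}(v)‖ ≤ 2‖x − y‖·‖v‖. -/
open scoped RealInnerProductSpace

attribute [local instance] Matrix.frobeniusNormedAddCommGroup Matrix.frobeniusNormedSpace

/-- The Stiefel manifold `St(d,r) = {x ∈ ℝ^{d×r} : xᵀx = I_r}`, viewed as a subset of the
`d × r` real matrices equipped with the Frobenius norm. -/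
def Stiefel (d r : ℕ) : Set (Matrix (Fin d) (Fin r) ℝ) :=
  {x | x.transpose * x = 1}

/-- Orthogonal projection onto the tangent space of the Stiefel manifold at `x`:
`P_{T_x}(v) = v - (1/2)·x·(xᵀv + vᵀx)`. -/
noncomputable def Tproj {d r : ℕ} (x v : Matrix (Fin d) (Fin r) ℝ) :
    Matrix (Fin d) (Fin r) ℝ :=
  v - (1 / 2 : ℝ) • (x * (x.transpose * v + v.transpose * x))

/-- `p` is a nearest-point projection of `z` onto the set `S` (w.r.t. the Frobenius norm). -/
def IsNearestPoint {d r : ℕ} (S : Set (Matrix (Fin d) (Fin r) ℝ))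
    (z p : Matrix (Fin d) (Fin r) ℝ) : Prop :=
  p ∈ S ∧ ∀ q ∈ S, ‖z - p‖ ≤ ‖z - q‖

/-- The second largest singular value of a real symmetric matrix `W`: the singular values are
the absolute values of the eigenvalues, and the second largest element (with multiplicity) of
the family `i ↦ |λ_i|` is `sup_{i ≠ j} min |λ_i| |λ_j|`. -/
noncomputable def sigma2 {n : ℕ} (W : Matrix (Fin n) (Fin n) ℝ) (hW : W.IsHermitian) : ℝ :=
  ⨆ p : {p : Fin n × Fin n // p.1 ≠ p.2}, min |hW.eigenvalues p.1.1| |hW.eigenvalues p.1.2|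

theorem frob_sq {m n : ℕ} (A : Matrix (Fin m) (Fin n) ℝ) :
    ‖A‖ ^ 2 = (A.transpose * A).trace := by
  have h0 : (0 : ℝ) ≤ ∑ i, ∑ j, ‖A i j‖ ^ (2 : ℝ) := by positivity
  rw [Matrix.frobenius_norm_def, ← Real.sqrt_eq_rpow, Real.sq_sqrt h0, Finset.sum_comm]
  simp [Matrix.trace, Matrix.mul_apply, pow_two]

theorem frob_stiefel_mul {d r k : ℕ} {x : Matrix (Fin d) (Fin r) ℝ} (hx : x.transpose * x = 1)
    (M : Matrix (Fin r) (Fin k) ℝ) : ‖x * M‖ = ‖M‖ := by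
  have h : ‖x * M‖ ^ 2 = ‖M‖ ^ 2 := by
    rw [frob_sq, frob_sq, Matrix.transpose_mul, Matrix.mul_assoc, ← Matrix.mul_assoc x.transpose,
      hx, Matrix.one_mul]
  exact (sq_eq_sq₀ (norm_nonneg _) (norm_nonneg _)).1 h

theorem frob_stiefel_transpose_mul {d r k : ℕ} {x : Matrix (Fin d) (Fin r) ℝ}
    (hx : x.transpose * x = 1)
    (v : Matrix (Fin d) (Fin k) ℝ) : ‖x.transpose * v‖ ≤ ‖v‖ := by
  have h : ‖v - x * (x.transpose * v)‖ ^ 2 = ‖v‖ ^ 2 - ‖x.transpose * v‖ ^ 2 := by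
    rw [frob_sq, frob_sq, frob_sq, ← Matrix.trace_sub]
    congr 1
    have e : x.transpose * (x * (x.transpose * v)) = x.transpose * v := by
      rw [← Matrix.mul_assoc, hx, Matrix.one_mul]
    simp only [Matrix.transpose_sub, Matrix.transpose_mul, Matrix.transpose_transpose,
      Matrix.sub_mul, Matrix.mul_sub, Matrix.mul_assoc, e]
    abel
  have := sq_nonneg ‖v - x * (x.transpose * v)‖
  exact (sq_le_sq₀ (norm_nonneg _) (norm_nonneg _)).1 (by linarith)

/-- For all `x, y ∈ St(d,r)` and every `v ∈ ℝ^{d×r}`, the tangent-space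
projections at `x` and `y` satisfy `‖P_{T_x}(v) - P_{T_y}(v)‖ ≤ 2‖x - y‖·‖v‖`. -/
theorem stmt1 {d r : ℕ} :
    ∀ x ∈ Stiefel d r, ∀ y ∈ Stiefel d r, ∀ v : Matrix (Fin d) (Fin r) ℝ,
      ‖Tproj x v - Tproj y v‖ ≤ 2 * ‖x - y‖ * ‖v‖ := by
  intro x hx y hy v
  have hx' : x.transpose * x = 1 := hx
  have hy' : y.transpose * y = 1 := hy
  have key : Tproj x v - Tproj y v = (1 / 2 : ℝ) •
      ((y * ((y - x).transpose * v) + (y - x) * (x.transpose * v)) +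
       (y * (v.transpose * (y - x)) + (y - x) * (v.transpose * x))) := by
    unfold Tproj
    rw [sub_sub_sub_cancel_left, ← smul_sub]
    congr 1
    simp only [Matrix.transpose_sub, Matrix.sub_mul, Matrix.mul_sub, Matrix.mul_add]
    abel
  have hn : ‖y - x‖ = ‖x - y‖ := norm_sub_rev _ _
  have h1 : ‖y * ((y - x).transpose * v)‖ ≤ ‖x - y‖ * ‖v‖ := by
    rw [frob_stiefel_mul hy', ← hn, ← Matrix.frobenius_norm_transpose (y - x)]
    exact Matrix.frobenius_norm_mul _ _
  have h2 : ‖(y - x) * (x.transpose * v)‖ ≤ ‖x - y‖ * ‖v‖ := by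
    rw [← hn]
    exact (Matrix.frobenius_norm_mul _ _).trans
      (mul_le_mul_of_nonneg_left (frob_stiefel_transpose_mul hx' v) (norm_nonneg _))
  have h3 : ‖y * (v.transpose * (y - x))‖ ≤ ‖x - y‖ * ‖v‖ := by
    rw [frob_stiefel_mul hy', ← hn, ← Matrix.frobenius_norm_transpose v, mul_comm]
    exact Matrix.frobenius_norm_mul _ _
  have h4 : ‖(y - x) * (v.transpose * x)‖ ≤ ‖x - y‖ * ‖v‖ := by
    have e : ‖v.transpose * x‖ = ‖x.transpose * v‖ := by
      rw [← Matrix.frobenius_norm_transpose, Matrix.transpose_mul, Matrix.transpose_transpose]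
    rw [← hn]
    refine (Matrix.frobenius_norm_mul _ _).trans
      (mul_le_mul_of_nonneg_left ?_ (norm_nonneg _))
    rw [e]
    exact frob_stiefel_transpose_mul hx' v
  rw [key, norm_smul, Real.norm_of_nonneg (by norm_num : (0 : ℝ) ≤ 1 / 2)]
  have t := norm_add_le (y * ((y - x).transpose * v) + (y - x) * (x.transpose * v))
    (y * (v.transpose * (y - x)) + (y - x) * (v.transpose * x))
  have t1 := norm_add_le (y * ((y - x).transpose * v)) ((y - x) * (x.transpose * v))
  have t2 := norm_add_le (y * (v.transpose * (y - x))) ((y - x) * (v.transpose * x))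
  linarith
end

section
/- (One-step consensus recursion with drift.) Let γ ∈ (0,1), L_g > 0, and let W be symmetric, doubly stochastic with nonnegative entries and second largest singular value σ₂ ∈ [0,1), with √n·σ₂^t·ζ ≤ γ(1−γ)/4. Let x_{1,k},…,x_{n,k} ∈ St(d,r) satisfy ‖x̂_k − x̄_k‖ ≤ γ/2, let η_{i,k} ∈ T_{x_{i,k}} St(d,r) with ‖η_{i,k}‖ ≤ 2L_g for each i, let 0 < α_k ≤ γ(1−γ)/(8L_g), and let x_{i,k+1} be any nearest-point projection of ∑_j (W^t)_{ij} x_{j,k} + α_k η_{i,k} onto St(d,r). Then, with stacked norms ‖x_k − x̄_k‖² := ∑_i ‖x_{i,k} − x̄_k‖², one has ‖x_{k+1} − x̄_{k+1}‖ ≤ (σ₂^t/(1−γ))‖x_k − x̄_k‖ + (2/(1−γ))·√n·α_k·L_g. -/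
open scoped RealInnerProductSpace

attribute [local instance] Matrix.frobeniusNormedAddCommGroup Matrix.frobeniusNormedSpace

open Matrix in
theorem aux_norm_sq {d r : ℕ} (a : Matrix (Fin d) (Fin r) ℝ) :
    ‖a‖ ^ 2 = trace (aᵀ * a) := by
  rw [Matrix.frobenius_norm_def, ← Real.sqrt_eq_rpow, Real.sq_sqrt]
  · simp only [trace, diag, mul_apply, transpose_apply]
    rw [Finset.sum_comm]
    simp [sq]
  · positivity

open Matrix in
theorem aux_cs {d r : ℕ} (a b : Matrix (Fin d) (Fin r) ℝ) :
    trace (aᵀ * b) ≤ ‖a‖ * ‖b‖ := by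
  have key : ∀ c : ℝ, 0 ≤ ‖a‖ ^ 2 * (c * c) + 2 * trace (aᵀ * b) * c + ‖b‖ ^ 2 := by
    intro c
    have h : ‖c • a + b‖ ^ 2 = ‖a‖ ^ 2 * (c * c) + 2 * trace (aᵀ * b) * c + ‖b‖ ^ 2 := by
      have : trace (bᵀ * a) = trace (aᵀ * b) := by
        rw [← trace_transpose, transpose_mul, transpose_transpose]
      simp only [aux_norm_sq, transpose_add, transpose_smul, Matrix.add_mul, Matrix.mul_add,
        trace_add, Matrix.smul_mul, Matrix.mul_smul, trace_smul, smul_eq_mul, this]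
      ring
    rw [← h]; positivity
  have h := discrim_le_zero key
  unfold discrim at h
  exact (le_abs_self _).trans (abs_le_of_sq_le_sq (by nlinarith) (by positivity))

open Matrix in
theorem aux_norm_st {d r : ℕ} {p : Matrix (Fin d) (Fin r) ℝ} (hp : p ∈ Stiefel d r) :
    ‖p‖ ^ 2 = r := by
  rw [aux_norm_sq, show pᵀ * p = 1 from hp]; simp

open Matrix in
theorem aux_norm_sub {d r : ℕ} (a b : Matrix (Fin d) (Fin r) ℝ) :
    ‖a - b‖ ^ 2 = ‖a‖ ^ 2 - 2 * trace (aᵀ * b) + ‖b‖ ^ 2 := by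
  have : trace (bᵀ * a) = trace (aᵀ * b) := by
    rw [← trace_transpose, transpose_mul, transpose_transpose]
  simp only [aux_norm_sq, transpose_sub, Matrix.sub_mul, Matrix.mul_sub,
    trace_sub, this]
  ring

open Matrix in
theorem aux_max {d r : ℕ} {z p : Matrix (Fin d) (Fin r) ℝ}
    (h : IsNearestPoint (Stiefel d r) z p) (q) (hq : q ∈ Stiefel d r) :
    trace (zᵀ * q) ≤ trace (zᵀ * p) := by
  have h1 := h.2 q hq
  have h2 : ‖z - p‖ ^ 2 ≤ ‖z - q‖ ^ 2 := by gcongr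
  rw [aux_norm_sub, aux_norm_sub, aux_norm_st h.1, aux_norm_st hq] at h2
  linarith

open Matrix in
theorem aux_exp_orth {d : ℕ} (A : Matrix (Fin d) (Fin d) ℝ) (hA : Aᵀ = -A) :
    (NormedSpace.exp A)ᵀ * NormedSpace.exp A = 1 := by
  rw [← Matrix.exp_transpose, hA, Matrix.exp_neg]
  exact Matrix.nonsing_inv_mul _ ((Matrix.isUnit_iff_isUnit_det _).mp (Matrix.isUnit_exp A))

open Matrix in
theorem aux_deriv {d : ℕ} (A : Matrix (Fin d) (Fin d) ℝ) 
    (L : Matrix (Fin d) (Fin d) ℝ →ₗ[ℝ] ℝ) 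
    (h : ∀ t : ℝ, L (NormedSpace.exp (t • A)) ≤ L 1) : L A = 0 := by
  let _ := Matrix.frobeniusNormedRing (m := Fin d) (α := ℝ)
  let _ := Matrix.frobeniusNormedAlgebra (m := Fin d) (R := ℝ) (α := ℝ)
  have h1 := hasDerivAt_exp_smul_const (𝕂 := ℝ) A (0 : ℝ)
  have h2 := (LinearMap.toContinuousLinearMap L).hasFDerivAt.comp_hasDerivAt (0:ℝ) h1
  have h3 : IsLocalMax ((LinearMap.toContinuousLinearMap L) ∘ fun u : ℝ => NormedSpace.exp (u • A)) 0 := by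
    refine Filter.Eventually.of_forall fun t => ?_
    simpa using h t
  have h4 := h3.hasDerivAt_eq_zero h2
  have h5 : L (NormedSpace.exp ((0:ℝ) • A) * A) = 0 := h4
  rwa [zero_smul, NormedSpace.exp_zero, one_mul] at h5

open Matrix in
theorem aux_sym {d r : ℕ} {z p : Matrix (Fin d) (Fin r) ℝ}
    (h : IsNearestPoint (Stiefel d r) z p) : z * pᵀ = p * zᵀ := by
  have hp : pᵀ * p = 1 := h.1
  set A : Matrix (Fin d) (Fin d) ℝ := z * pᵀ - p * zᵀ with hAdef
  have hA : Aᵀ = -A := by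
    simp [hAdef, transpose_sub, transpose_mul]
  let L : Matrix (Fin d) (Fin d) ℝ →ₗ[ℝ] ℝ :=
    { toFun := fun M => trace (zᵀ * (M * p))
      map_add' := by intro a b; simp [Matrix.add_mul, Matrix.mul_add]
      map_smul' := by intro a b; simp }
  have h0 : L A = 0 := by
    apply aux_deriv
    intro t
    have := aux_max h (NormedSpace.exp (t • A) * p) (by
      show (NormedSpace.exp (t • A) * p)ᵀ * (NormedSpace.exp (t • A) * p) = 1
      have ho := aux_exp_orth (t • A) (by rw [transpose_smul, hA, smul_neg])
      rw [transpose_mul, Matrix.mul_assoc, ← Matrix.mul_assoc _ _ p, ho, Matrix.one_mul, hp])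
    have e1 : L (1 : Matrix (Fin d) (Fin d) ℝ) = trace (zᵀ * p) := by
      show trace (zᵀ * ((1 : Matrix (Fin d) (Fin d) ℝ) * p)) = _
      rw [Matrix.one_mul]
    rw [e1]
    exact this
  have h1 : trace (p * zᵀ * A) = 0 := by
    have : trace (zᵀ * (A * p)) = 0 := h0
    rwa [← Matrix.mul_assoc, trace_mul_comm, ← Matrix.mul_assoc] at this
  have h2 : trace (z * pᵀ * A) = 0 := by
    rw [← trace_transpose, transpose_mul, hA, transpose_mul, transpose_transpose, trace_mul_comm]
    simp [h1]
  have h3 : ‖A‖ ^ 2 = 0 := by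
    rw [aux_norm_sq, hA, Matrix.neg_mul, trace_neg]
    nth_rw 1 [hAdef]
    rw [Matrix.sub_mul, trace_sub, h1, h2]; simp
  have h4 : A = 0 := by
    have := pow_eq_zero_iff (two_ne_zero) |>.1 h3
    exact norm_eq_zero.1 this
  exact sub_eq_zero.1 h4

open Matrix in
/-- Proximal normal inequality. -/
theorem aux_prox {d r : ℕ} {z p q : Matrix (Fin d) (Fin r) ℝ}
    (h : IsNearestPoint (Stiefel d r) z p) (hq : q ∈ Stiefel d r) :
    2 * trace ((z - p)ᵀ * (q - p)) ≤ ‖z - p‖ * ‖q - p‖ ^ 2 := by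
  have hp : pᵀ * p = 1 := h.1
  have hq' : qᵀ * q = 1 := hq
  have hs := aux_sym h
  set S := zᵀ * p - 1 with hS
  have hz : z - p = p * S := by
    have : z * pᵀ * p = p * zᵀ * p := by rw [hs]
    rw [Matrix.mul_assoc, hp, Matrix.mul_one] at this
    rw [hS, Matrix.mul_sub, Matrix.mul_one, ← Matrix.mul_assoc, ← this]
  have hSs : Sᵀ = S := by
    have : pᵀ * (z * pᵀ) * p = pᵀ * (p * zᵀ) * p := by rw [hs]
    rw [← Matrix.mul_assoc pᵀ p, hp, Matrix.one_mul, ← Matrix.mul_assoc, Matrix.mul_assoc _ pᵀ p,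
      hp, Matrix.mul_one] at this
    simp [hS, transpose_sub, transpose_mul, this]
  have hn : ‖z - p‖ = ‖S‖ := by
    have : ‖z - p‖ ^ 2 = ‖S‖ ^ 2 := by
      rw [hz, aux_norm_sq, aux_norm_sq, transpose_mul, Matrix.mul_assoc, ← Matrix.mul_assoc pᵀ,
        hp, Matrix.one_mul]
    exact (pow_left_inj₀ (norm_nonneg _) (norm_nonneg _) two_ne_zero).1 this
  have e1 : 2 * trace ((z - p)ᵀ * (q - p)) = trace ((-(q - p) * S)ᵀ * (q - p)) := by
    rw [hz, transpose_mul, transpose_mul, hSs]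
    have e : trace (S * (qᵀ * p)) = trace (S * (pᵀ * q)) := by
      rw [← trace_transpose, transpose_mul, transpose_mul, transpose_transpose, hSs,
        trace_mul_comm]
    simp only [transpose_neg, transpose_sub, Matrix.mul_sub, Matrix.sub_mul, Matrix.mul_neg,
      Matrix.neg_mul, Matrix.mul_assoc, trace_sub, trace_neg, hp, hq', e]
    ring
  rw [e1, hn]
  calc _ ≤ ‖-(q - p) * S‖ * ‖q - p‖ := aux_cs _ _
    _ ≤ (‖-(q-p)‖ * ‖S‖) * ‖q - p‖ := by gcongr; exact Matrix.frobenius_norm_mul _ _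
    _ = _ := by rw [norm_neg]; ring

open Matrix in
theorem aux_lip {d r : ℕ} {z p w q : Matrix (Fin d) (Fin r) ℝ} {γ : ℝ}
    (hγ : γ < 1)
    (h : IsNearestPoint (Stiefel d r) z p) (h' : IsNearestPoint (Stiefel d r) w q)
    (hz : ‖z - p‖ ≤ γ) (hw : ‖w - q‖ ≤ γ) :
    ‖p - q‖ ≤ 1 / (1 - γ) * ‖z - w‖ := by
  have a1 := aux_prox h h'.1
  have a2 := aux_prox h' h.1
  have a3 : ‖z - p‖ * ‖q - p‖ ^ 2 ≤ γ * ‖p - q‖ ^ 2 := by rw [norm_sub_rev q p]; gcongr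
  have a4 : ‖w - q‖ * ‖p - q‖ ^ 2 ≤ γ * ‖p - q‖ ^ 2 := by gcongr
  have e : trace ((z - w)ᵀ * (p - q)) = ‖p - q‖ ^ 2 - trace ((z - p)ᵀ * (q - p))
      - trace ((w - q)ᵀ * (p - q)) := by
    rw [aux_norm_sq]
    simp only [transpose_sub, Matrix.sub_mul, Matrix.mul_sub, trace_sub]
    ring
  have c := aux_cs (z - w) (p - q)
  have h1 : 0 < 1 - γ := by linarith
  have k : (1 - γ) * ‖p - q‖ ^ 2 ≤ ‖z - w‖ * ‖p - q‖ := by linarith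
  rw [one_div, ← div_eq_inv_mul, le_div_iff₀ h1]
  by_cases h0 : ‖p - q‖ = 0
  · rw [h0]; simp
  · have : 0 < ‖p - q‖ := lt_of_le_of_ne (norm_nonneg _) (Ne.symm h0)
    nlinarith

theorem aux_sigma_step {n : ℕ} (W : Matrix (Fin n) (Fin n) ℝ) (hW : W.IsHermitian)
    (hrow : ∀ i, ∑ j, W i j = 1)
    (hσ : sigma2 W hW ∈ Set.Ico (0 : ℝ) 1) (y : Fin n → ℝ) (hy : ∑ i, y i = 0) :
    ∑ i, (W.mulVec y i) ^ 2 ≤ sigma2 W hW ^ 2 * ∑ i, y i ^ 2 := by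
  set b := hW.eigenvectorBasis with hb
  set lam := hW.eigenvalues with hlam
  let Y : EuclideanSpace ℝ (Fin n) := WithLp.toLp 2 y
  let WY : EuclideanSpace ℝ (Fin n) := WithLp.toLp 2 (W.mulVec y)
  let one : EuclideanSpace ℝ (Fin n) := WithLp.toLp 2 (fun _ => 1)
  have hsymm : ∀ u v : Fin n → ℝ, u ⬝ᵥ W.mulVec v = W.mulVec u ⬝ᵥ v := by
    intro u v
    have ht : W.transpose = W := by simpa [Matrix.IsHermitian] using hW
    rw [Matrix.dotProduct_mulVec, ← Matrix.mulVec_transpose, ht]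
  have hdot : ∀ (i) (v : Fin n → ℝ), (b i).ofLp ⬝ᵥ W.mulVec v = lam i * ((b i).ofLp ⬝ᵥ v) := by
    intro i v
    rw [hsymm, hb, hW.mulVec_eigenvectorBasis i, smul_dotProduct, smul_eq_mul]
  have hin : ∀ (i) (v : Fin n → ℝ), inner ℝ (b i) (WithLp.toLp 2 v) = (b i).ofLp ⬝ᵥ v := by
    intro i v
    simp [PiLp.inner_apply, dotProduct, mul_comm]
  have hpars : ∀ v : Fin n → ℝ, ∑ i, v i ^ 2 = ∑ i, ((b i).ofLp ⬝ᵥ v) ^ 2 := by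
    intro v
    have := b.sum_sq_norm_inner_right (WithLp.toLp 2 v)
    simp only [hin, Real.norm_eq_abs, sq_abs] at this
    rw [this, EuclideanSpace.norm_sq_eq]
    simp
  have hW1 : W.mulVec (fun _ => 1) = fun _ => 1 := by
    ext i; simp [Matrix.mulVec, dotProduct, hrow]
  have heig : ∀ i, (b i).ofLp ⬝ᵥ (fun _ => (1:ℝ)) ≠ 0 → lam i = 1 := by
    intro i hi
    have := hdot i (fun _ => 1)
    rw [hW1] at this
    exact mul_right_cancel₀ hi (by linarith)
  have hle : ∀ i j, i ≠ j → min |lam i| |lam j| ≤ sigma2 W hW := by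
    intro i j hij
    exact le_ciSup (f := fun p : {p : Fin n × Fin n // p.1 ≠ p.2} =>
      min |hW.eigenvalues p.1.1| |hW.eigenvalues p.1.2|) (Set.finite_range _).bddAbove ⟨(i, j), hij⟩
  rw [hpars, hpars y, Finset.mul_sum]
  apply Finset.sum_le_sum
  intro i _
  rw [hdot, mul_pow]
  by_cases hi : lam i = 1
  · -- then b i is proportional to one
    have hz : (b i).ofLp ⬝ᵥ y = 0 := by
      have hj : ∀ j, j ≠ i → (b j).ofLp ⬝ᵥ (fun _ => (1:ℝ)) = 0 := by
        intro j hji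
        by_contra hne
        have h1 := heig j hne
        have := hle j i hji
        rw [h1, hi] at this
        simp at this
        linarith [hσ.2]
      have hrep := b.sum_inner_mul_inner one Y
      have hoy : inner ℝ one Y = 0 := by
        simp [one, Y, PiLp.inner_apply, hy]
      rw [hoy, Finset.sum_eq_single i] at hrep
      · rw [real_inner_comm, hin, hin] at hrep
        rcases mul_eq_zero.1 hrep with h | h
        · exfalso
          have hp := hpars (fun _ => 1)
          rw [Finset.sum_eq_zero (s := Finset.univ) (f := fun i => ((b i).ofLp ⬝ᵥ fun _ => (1:ℝ)) ^ 2)] at hp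
          · simp at hp
            subst hp
            exact i.elim0
          · intro j _
            by_cases hji : j = i
            · subst hji; rw [h]; simp
            · rw [hj j hji]; simp
        · exact h
      · intro j _ hji
        rw [real_inner_comm, hin, hj j hji, zero_mul]
      · simp
    rw [hz]; simp
  · have hl : |lam i| ≤ sigma2 W hW := by
      -- there is an index with eigenvalue 1
      have : ∃ j, lam j = 1 := by
        by_contra hno
        push Not at hno
        have hp := hpars (fun _ => 1)
        rw [Finset.sum_eq_zero (s := Finset.univ) (f := fun i => ((b i).ofLp ⬝ᵥ fun _ => (1:ℝ)) ^ 2)] at hp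
        · simp at hp
          subst hp
          exact i.elim0
        · intro j _
          have : (b j).ofLp ⬝ᵥ (fun _ => (1:ℝ)) = 0 := by
            by_contra hne
            exact hno j (heig j hne)
          rw [this]; simp
      obtain ⟨j, hj⟩ := this
      have := hle i j (by rintro rfl; exact hi hj)
      rw [hj, abs_one] at this
      rcases min_le_iff.1 this with h | h
      · exact h
      · linarith [hσ.2]
    have : lam i ^ 2 ≤ sigma2 W hW ^ 2 := by rw [← sq_abs]; gcongr
    gcongr

theorem aux_sigma_pow {n : ℕ} (W : Matrix (Fin n) (Fin n) ℝ) (hW : W.IsHermitian)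
    (hrow : ∀ i, ∑ j, W i j = 1) (hcol : ∀ j, ∑ i, W i j = 1)
    (hσ : sigma2 W hW ∈ Set.Ico (0 : ℝ) 1) (t : ℕ) : ∀ (y : Fin n → ℝ) (hy : ∑ i, y i = 0),
    ∑ i, ((W ^ t).mulVec y i) ^ 2 ≤ (sigma2 W hW ^ t) ^ 2 * ∑ i, y i ^ 2 := by
  induction t with
  | zero => intro y hy; simp
  | succ t ih =>
    intro y hy
    have h0 : ∑ i, W.mulVec y i = 0 := by
      simp only [Matrix.mulVec, dotProduct]
      rw [Finset.sum_comm]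
      simp [← Finset.sum_mul, hcol, hy]
    have h1 := ih (W.mulVec y) h0
    have h2 := aux_sigma_step W hW hrow hσ y hy
    rw [pow_succ, ← Matrix.mulVec_mulVec]
    refine h1.trans ?_
    calc _ ≤ (sigma2 W hW ^ t) ^ 2 * (sigma2 W hW ^ 2 * ∑ i, y i ^ 2) := by gcongr
      _ = _ := by ring

theorem aux_rowsum {n : ℕ} (W : Matrix (Fin n) (Fin n) ℝ) 
    (hrow : ∀ i, ∑ j, W i j = 1) (t : ℕ) : ∀ i, ∑ j, (W ^ t) i j = 1 := by
  have hW1 : W.mulVec (fun _ => 1) = fun _ => 1 := by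
    ext i; simp [Matrix.mulVec, dotProduct, hrow]
  have : (W ^ t).mulVec (fun _ => 1) = fun _ => 1 := by
    induction t with
    | zero => simp
    | succ t ih => rw [pow_succ, ← Matrix.mulVec_mulVec, hW1, ih]
  intro i
  have := congrFun this i
  simpa [Matrix.mulVec, dotProduct] using this

theorem aux_norm_sum {d r : ℕ} (a : Matrix (Fin d) (Fin r) ℝ) :
    ‖a‖ ^ 2 = ∑ k, ∑ l, a k l ^ 2 := by
  rw [Matrix.frobenius_norm_def, ← Real.sqrt_eq_rpow, Real.sq_sqrt]
  · simp
  · positivity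

theorem aux_mean {d r n : ℕ} (hn : n ≠ 0) (x : Fin n → Matrix (Fin d) (Fin r) ℝ)
    (q : Matrix (Fin d) (Fin r) ℝ) :
    ∑ i, ‖x i - q‖ ^ 2 = ∑ i, ‖x i - (n : ℝ)⁻¹ • ∑ i, x i‖ ^ 2
      + n * ‖(n : ℝ)⁻¹ • ∑ i, x i - q‖ ^ 2 := by
  have hn' : (n : ℝ) ≠ 0 := by exact_mod_cast hn
  set m := (n : ℝ)⁻¹ • ∑ i, x i with hm
  have hs : ∑ i, x i = (n : ℝ) • m := by rw [hm, smul_smul, mul_inv_cancel₀ hn', one_smul]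
  have h : ∀ i, ‖x i - q‖ ^ 2 = ‖x i - m‖ ^ 2 + ‖m - q‖ ^ 2
      + 2 * Matrix.trace ((x i - m).transpose * (m - q)) := by
    intro i
    have := aux_norm_sub (x i - m) (q - m)
    rw [show x i - m - (q - m) = x i - q by abel] at this
    rw [this, norm_sub_rev q m, show q - m = -(m - q) by abel, Matrix.mul_neg, Matrix.trace_neg]
    ring
  have h0 : ∑ i, Matrix.trace ((x i - m).transpose * (m - q)) = 0 := by
    rw [← Matrix.trace_sum, ← Matrix.sum_mul, ← Matrix.transpose_sum, Finset.sum_sub_distrib, hs]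
    simp [← Nat.cast_smul_eq_nsmul ℝ]
  simp_rw [h]
  rw [Finset.sum_add_distrib, Finset.sum_add_distrib, ← Finset.mul_sum, h0]
  simp

theorem aux_consensus {d r n : ℕ} (hn : n ≠ 0) (W : Matrix (Fin n) (Fin n) ℝ) (hW : W.IsHermitian)
    (hrow : ∀ i, ∑ j, W i j = 1) (hcol : ∀ j, ∑ i, W i j = 1)
    (hσ : sigma2 W hW ∈ Set.Ico (0 : ℝ) 1) (t : ℕ) (x : Fin n → Matrix (Fin d) (Fin r) ℝ) :
    ∑ i, ‖∑ j, (W ^ t) i j • x j - (n : ℝ)⁻¹ • ∑ i, x i‖ ^ 2 ≤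
      (sigma2 W hW ^ t) ^ 2 * ∑ i, ‖x i - (n : ℝ)⁻¹ • ∑ i, x i‖ ^ 2 := by
  have hn' : (n : ℝ) ≠ 0 := by exact_mod_cast hn
  set m := (n : ℝ)⁻¹ • ∑ i, x i with hm
  have hs : ∑ i, x i = (n : ℝ) • m := by rw [hm, smul_smul, mul_inv_cancel₀ hn', one_smul]
  have hr := aux_rowsum W hrow t
  have h1 : ∀ i k l, (∑ j, (W ^ t) i j • x j - m) k l
      = (W ^ t).mulVec (fun j => (x j - m) k l) i := by
    intro i k l
    simp only [Matrix.mulVec, dotProduct, Matrix.sub_apply, Matrix.sum_apply, Matrix.smul_apply,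
      smul_eq_mul, mul_sub, Finset.sum_sub_distrib, ← Finset.sum_mul, hr, one_mul]
  have h2 : ∀ k l, ∑ j, (x j - m) k l = 0 := by
    intro k l
    have := congrFun (congrFun hs k) l
    simp only [Matrix.sum_apply, Matrix.smul_apply, smul_eq_mul] at this
    simp [Matrix.sub_apply, Finset.sum_sub_distrib, this]
  simp_rw [aux_norm_sum]
  have sw : ∀ f : Fin n → Fin d → Fin r → ℝ, ∑ i, ∑ k, ∑ l, f i k l = ∑ k, ∑ l, ∑ i, f i k l := by
    intro f
    rw [Finset.sum_comm]
    refine Finset.sum_congr rfl fun k _ => ?_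
    rw [Finset.sum_comm]
  rw [sw, sw, Finset.mul_sum]
  refine Finset.sum_le_sum fun k _ => ?_
  rw [Finset.mul_sum]
  refine Finset.sum_le_sum fun l _ => ?_
  simp_rw [h1]
  exact aux_sigma_pow W hW hrow hcol hσ t _ (h2 k l)

theorem aux_mink {n : ℕ} (a : Fin n → ℝ) (c : ℝ) (hc : 0 ≤ c) :
    Real.sqrt (∑ i, (a i + c) ^ 2) ≤ Real.sqrt (∑ i, a i ^ 2) + Real.sqrt n * c := by
  apply Real.sqrt_le_iff.2
  refine ⟨by positivity, ?_⟩
  have h1 : ∑ i, a i ≤ Real.sqrt n * Real.sqrt (∑ i, a i ^ 2) := by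
    rw [← Real.sqrt_mul (by positivity)]
    apply Real.le_sqrt_of_sq_le
    have := sq_sum_le_card_mul_sum_sq (s := (Finset.univ : Finset (Fin n))) (f := a)
    simpa using this
  have e : ∑ i, (a i + c) ^ 2 = ∑ i, a i ^ 2 + 2 * c * ∑ i, a i + n * c ^ 2 := by
    simp_rw [add_sq, Finset.sum_add_distrib, Finset.mul_sum]
    simp only [Finset.sum_const, Finset.card_univ, Fintype.card_fin, nsmul_eq_mul]
    congr 2
    exact Finset.sum_congr rfl fun i _ => by ring
  have s1 := Real.sq_sqrt (show 0 ≤ ∑ i, a i ^ 2 by positivity)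
  have s2 := Real.sq_sqrt (show (0:ℝ) ≤ n by positivity)
  have h2 := mul_le_mul_of_nonneg_left h1 hc
  rw [e, add_sq, s1, mul_pow, s2]
  nlinarith

theorem aux_bdd (d r : ℕ) : Bornology.IsBounded (Stiefel d r) := by
  refine isBounded_iff_forall_norm_le.2 ⟨Real.sqrt r, fun p hp => ?_⟩
  exact Real.le_sqrt_of_sq_le (aux_norm_st hp).le

/-- One-step consensus recursion with drift. -/
theorem stmt11 {d r n : ℕ} (γ Lg : ℝ) (hγ : γ ∈ Set.Ioo (0 : ℝ) 1) (hLg : 0 < Lg)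
    (W : Matrix (Fin n) (Fin n) ℝ) (hW : W.IsHermitian)
    (hnn : ∀ i j, 0 ≤ W i j)
    (hrow : ∀ i, ∑ j, W i j = 1) (hcol : ∀ j, ∑ i, W i j = 1)
    (hσ : sigma2 W hW ∈ Set.Ico (0 : ℝ) 1)
    (t : ℕ) (ht : 0 < t)
    (hmix : Real.sqrt n * sigma2 W hW ^ t * Metric.diam (Stiefel d r) ≤ γ * (1 - γ) / 4)
    (x : Fin n → Matrix (Fin d) (Fin r) ℝ) (hx : ∀ i, x i ∈ Stiefel d r)
    (xbar : Matrix (Fin d) (Fin r) ℝ)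
    (hxbar : IsNearestPoint (Stiefel d r) ((n : ℝ)⁻¹ • ∑ i, x i) xbar)
    (hcons : ‖(n : ℝ)⁻¹ • ∑ i, x i - xbar‖ ≤ γ / 2)
    (η : Fin n → Matrix (Fin d) (Fin r) ℝ)
    (hηtan : ∀ i, (x i).transpose * η i + (η i).transpose * x i = 0)
    (hηbd : ∀ i, ‖η i‖ ≤ 2 * Lg)
    (α : ℝ) (hα0 : 0 < α) (hα : α ≤ γ * (1 - γ) / (8 * Lg))
    (x' : Fin n → Matrix (Fin d) (Fin r) ℝ)
    (hx' : ∀ i, IsNearestPoint (Stiefel d r)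
      (∑ j, (W ^ t) i j • x j + α • η i) (x' i)) :
    ∀ xbar', IsNearestPoint (Stiefel d r) ((n : ℝ)⁻¹ • ∑ i, x' i) xbar' →
      Real.sqrt (∑ i, ‖x' i - xbar'‖ ^ 2) ≤
        sigma2 W hW ^ t / (1 - γ) * Real.sqrt (∑ i, ‖x i - xbar‖ ^ 2) +
          2 / (1 - γ) * Real.sqrt n * α * Lg := by
  intro xbar' hxbar'
  obtain ⟨hγ0, hγ1⟩ := hγ
  have h1γ : 0 < 1 - γ := by linarith
  by_cases hn : n = 0
  · subst hn
    simp
  have hnpos : (0 : ℝ) < n := by exact_mod_cast Nat.pos_of_ne_zero hn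
  set s := sigma2 W hW with hs
  have hst : 0 ≤ s ^ t := pow_nonneg hσ.1 t
  set m := (n : ℝ)⁻¹ • ∑ i, x i with hm
  set e : Fin n → Matrix (Fin d) (Fin r) ℝ := fun i => ∑ j, (W ^ t) i j • x j - m with he
  -- consensus contraction
  have hE : ∑ i, ‖e i‖ ^ 2 ≤ (s ^ t) ^ 2 * ∑ i, ‖x i - m‖ ^ 2 :=
    aux_consensus hn W hW hrow hcol hσ t x
  have hM : ∑ i, ‖x i - m‖ ^ 2 ≤ ∑ i, ‖x i - xbar‖ ^ 2 := by
    rw [aux_mean hn x xbar]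
    have : 0 ≤ (n : ℝ) * ‖m - xbar‖ ^ 2 := by positivity
    linarith
  have hE2 : Real.sqrt (∑ i, ‖e i‖ ^ 2) ≤ s ^ t * Real.sqrt (∑ i, ‖x i - xbar‖ ^ 2) := by
    apply Real.sqrt_le_iff.2
    refine ⟨by positivity, ?_⟩
    rw [mul_pow, Real.sq_sqrt (by positivity)]
    exact hE.trans (by gcongr)
  have hD : Real.sqrt (∑ i, ‖x i - xbar‖ ^ 2) ≤ Real.sqrt n * Metric.diam (Stiefel d r) := by
    apply Real.sqrt_le_iff.2
    refine ⟨mul_nonneg (Real.sqrt_nonneg _) Metric.diam_nonneg, ?_⟩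
    rw [mul_pow, Real.sq_sqrt hnpos.le]
    have : ∀ i ∈ (Finset.univ : Finset (Fin n)),
        ‖x i - xbar‖ ^ 2 ≤ Metric.diam (Stiefel d r) ^ 2 := by
      intro i _
      have := Metric.dist_le_diam_of_mem (aux_bdd d r) (hx i) hxbar.1
      rw [dist_eq_norm] at this
      gcongr
    simpa using Finset.sum_le_sum this
  have hei : ∀ i, ‖e i‖ ≤ γ * (1 - γ) / 4 := by
    intro i
    have a1 : ‖e i‖ ≤ Real.sqrt (∑ i, ‖e i‖ ^ 2) := by
      apply Real.le_sqrt_of_sq_le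
      exact Finset.single_le_sum (f := fun i => ‖e i‖ ^ 2) (fun _ _ => by positivity)
        (Finset.mem_univ i)
    have a2 := mul_le_mul_of_nonneg_left hD hst
    linarith
  have hαη : ∀ i, ‖α • η i‖ ≤ 2 * α * Lg := by
    intro i
    rw [norm_smul, Real.norm_eq_abs, abs_of_pos hα0]
    have := mul_le_mul_of_nonneg_left (hηbd i) hα0.le
    linarith
  have hαL : 2 * α * Lg ≤ γ * (1 - γ) / 4 := by
    rw [le_div_iff₀ (by positivity)] at hα
    linarith
  have hγγ : γ * (1 - γ) ≤ γ := by nlinarith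
  have hz : ∀ i, ‖(∑ j, (W ^ t) i j • x j + α • η i) - m‖ ≤ ‖e i‖ + 2 * α * Lg := by
    intro i
    have : (∑ j, (W ^ t) i j • x j + α • η i) - m = e i + α • η i := by
      simp only [he]; abel
    rw [this]
    exact (norm_add_le _ _).trans (by linarith [hαη i])
  have hlip : ∀ i, ‖x' i - xbar‖ ≤ 1 / (1 - γ) * (‖e i‖ + 2 * α * Lg) := by
    intro i
    have hd : ‖(∑ j, (W ^ t) i j • x j + α • η i) - x' i‖ ≤ γ := by
      refine ((hx' i).2 xbar hxbar.1).trans ?_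
      refine (norm_sub_le_norm_sub_add_norm_sub _ m _).trans ?_
      linarith [hz i, hei i]
    refine (aux_lip hγ1 (hx' i) hxbar hd (by linarith)).trans ?_
    have := hz i
    gcongr
  have hfin : Real.sqrt (∑ i, ‖x' i - xbar'‖ ^ 2) ≤ Real.sqrt (∑ i, ‖x' i - xbar‖ ^ 2) := by
    apply Real.sqrt_le_sqrt
    rw [aux_mean hn x' xbar', aux_mean hn x' xbar]
    have := hxbar'.2 xbar hxbar.1
    gcongr
  have hstep : Real.sqrt (∑ i, ‖x' i - xbar‖ ^ 2) ≤
      1 / (1 - γ) * Real.sqrt (∑ i, (‖e i‖ + 2 * α * Lg) ^ 2) := by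
    apply Real.sqrt_le_iff.2
    refine ⟨by positivity, ?_⟩
    rw [mul_pow, Real.sq_sqrt (by positivity), Finset.mul_sum]
    refine Finset.sum_le_sum fun i _ => ?_
    rw [← mul_pow]
    have := hlip i
    gcongr
  have hmk := aux_mink (fun i => ‖e i‖) (2 * α * Lg) (by positivity)
  calc _ ≤ 1 / (1 - γ) * Real.sqrt (∑ i, (‖e i‖ + 2 * α * Lg) ^ 2) := hfin.trans hstep
    _ ≤ 1 / (1 - γ) * (s ^ t * Real.sqrt (∑ i, ‖x i - xbar‖ ^ 2) + Real.sqrt n * (2 * α * Lg)) := by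
      gcongr
      exact hmk.trans (by linarith)
    _ = _ := by ring
end
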